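/- Let (X,d) be a complete metric space that is doubling with some constant D ∈ ℕ, let α, β ∈ (0,1), let S ⊆ X, and let a subgame of the (α,β)-Schmidt game with target set S be given by data (ι, c, r, (T^i)) as in the context. Suppose there exist ĩ ∈ ι, ñ ∈ ℕ, and an integer m ≥ 1 such that for every n ≥ ñ and every position p ∈ T^ĩ of length 2n+1 there are m distinct points a₀,…,a_{m−1} ∈ X with p ⌢ ⟨a_j⟩ ∈ T^ĩ for each j and with the interiors of the closed balls B̄(a_j, (α·β)^(n+1)·r(ĩ)) pairwise disjoint. If dim_H(S) < log(m) / log(1/(α·β)), then Player II has a winning strategy in the subgame. -/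

import Mathlib

open Metric Set
open scoped ENNReal

/-- A tree of finite sequences: nonempty, prefix-closed, every position has a one-step
extension. -/
def IsTree {A : Type*} (T : Set (List A)) : Prop :=
  T.Nonempty ∧ (∀ p ∈ T, ∀ q : List A, q <+: p → q ∈ T) ∧ ∀ p ∈ T, ∃ a : A, p ++ [a] ∈ T

/-- The radius `ρ_k = α^(⌈(k+1)/2⌉) · β^(⌊(k+1)/2⌋) · ρinit` of the `k`-th ball of a play of
the `(α,β)`-Schmidt game with initial radius `ρinit`. -/
noncomputable def rho (α β ρinit : ℝ) (k : ℕ) : ℝ := α ^ (k / 2 + 1) * β ^ ((k + 1) / 2) * ρinit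

variable {X : Type*} [MetricSpace X]

/-- `T` is a tree of centers for the `(α,β)`-Schmidt game with initial ball
`B̄(c,ρ)`: the balls encoded along every position are nested. -/
def IsSchmidtTree (α β : ℝ) (c : X) (ρ : ℝ) (T : Set (List X)) : Prop :=
  IsTree T ∧ ∀ p ∈ T, ∀ k : ℕ, k < p.length →
    closedBall (p.getD k c) (rho α β ρ k) ⊆
      if k = 0 then closedBall c ρ else closedBall (p.getD (k - 1) c) (rho α β ρ (k - 1))

/-!
Cover `S` by sets `t k` of diameter at most `(αβ) ^ N k * ρ`; since `αβ` raised to the power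
`log m / log (1/(αβ))` is `1/m`, the dimension bound makes `∑' k, m⁻¹ ^ N k` as small as we like.
Player II wins by making the ball of radius `(αβ) ^ N k * ρ` miss `t k` for every `k`. This is a
closed condition, so by open determinacy it is enough that Player I cannot force a hit. If Player I
could, then playing the forcing strategy against `m` disjoint answers of Player II at every stage
`n ≥ n₀`, with a unit of mass at stage `n₀` divided by `m` at each of them, would distribute the
whole mass over finitely many disjoint balls, each hitting a `t k` of its own scale. But by doubling
at most `D ^ 3` disjoint balls of that scale hit a given `t k`, so these balls carry mass at most
`m ^ n₀ * D ^ 3 * ∑' k, m⁻¹ ^ N k < 1`.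
-/

/-! ### Open games on trees -/

section OpenGame

variable {A : Type*} {T G : Set (List A)}

theorem IsTree.nil_mem (hT : IsTree T) : [] ∈ T := by
  obtain ⟨p, hp⟩ := hT.1
  exact hT.2.1 p hp [] p.nil_prefix

theorem ofFn_append_singleton (y : ℕ → A) (n : ℕ) :
    (List.ofFn fun j : Fin n => y j) ++ [y n] = List.ofFn fun j : Fin (n + 1) => y j :=
  (List.ofFn_succ_last (f := fun j : Fin (n + 1) => y j)).symm

/-- Player I, who moves at the positions of even length, can force the play on `T` from the
given position into the goal `G` in finitely many moves. Being inductive, the predicate is the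
well-founded form of a winning strategy in the open game with goal `G`. -/
inductive PlayerIForces (T G : Set (List A)) : List A → Prop
  | goal {p : List A} (hp : p ∈ G) : PlayerIForces T G p
  | moveI {p : List A} {a : A} (hp : Even p.length) (ha : p ++ [a] ∈ T)
      (h : PlayerIForces T G (p ++ [a])) : PlayerIForces T G p
  | moveII {p : List A} (hp : Odd p.length)
      (h : ∀ a, p ++ [a] ∈ T → PlayerIForces T G (p ++ [a])) : PlayerIForces T G p

theorem exists_append_mem_not_playerIForces {p : List A} (hp : Odd p.length)
    (h : ¬ PlayerIForces T G p) : ∃ a, p ++ [a] ∈ T ∧ ¬ PlayerIForces T G (p ++ [a]) := by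
  by_contra! hforce
  exact h (.moveII hp hforce)

theorem IsTree.exists_strategy_avoiding [Nonempty A] (hT : IsTree T)
    (h : ¬ PlayerIForces T G []) :
    ∃ σ : List A → A, (∀ p ∈ T, Odd p.length → p ++ [σ p] ∈ T) ∧
      ∀ y : ℕ → A, (∀ n : ℕ, (List.ofFn fun j : Fin n => y j) ∈ T) →
        (∀ n : ℕ, Odd n → y n = σ (List.ofFn fun j : Fin n => y j)) →
        ∀ n : ℕ, (List.ofFn fun j : Fin n => y j) ∉ G := by
  have hmove : ∀ p ∈ T, Odd p.length → ∃ a, p ++ [a] ∈ T ∧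
      (¬ PlayerIForces T G p → ¬ PlayerIForces T G (p ++ [a])) := by
    intro p hp hodd
    by_cases hforce : PlayerIForces T G p
    · obtain ⟨a, ha⟩ := hT.2.2 p hp
      exact ⟨a, ha, fun hnot => absurd hforce hnot⟩
    · obtain ⟨a, ha, hnot⟩ := exists_append_mem_not_playerIForces hodd hforce
      exact ⟨a, ha, fun _ => hnot⟩
  choose! σ hσT hσ using hmove
  refine ⟨σ, hσT, fun y hy hyσ n hG => ?_⟩
  suffices hsafe : ∀ n : ℕ, ¬ PlayerIForces T G (List.ofFn fun j : Fin n => y j) from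
    hsafe n (.goal hG)
  intro n
  induction n with
  | zero => simpa using h
  | succ n ih =>
    rw [← ofFn_append_singleton]
    rcases Nat.even_or_odd n with heven | hodd
    · refine fun hforce => ih (.moveI (by simpa using heven) ?_ hforce)
      exact ofFn_append_singleton y n ▸ hy (n + 1)
    · exact hyσ n hodd ▸ hσ _ (hy n) (by simpa using hodd) ih

/-- Let `V` shrink along the tree and let the weight `W` not decrease at any move of Player I and
be dominated by the total weight of finitely many `V`-disjoint moves of Player II. Following a
forcing strategy against all these moves at once spreads the weight over the goal positions
reached. -/
theorem PlayerIForces.exists_pairwiseDisjoint_le_sum {L M : Type*} [PartialOrder L] [OrderBot L]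
    [AddCommMonoid M] [PartialOrder M] [IsOrderedAddMonoid M] {V : List A → L} {W : List A → M}
    (hV : ∀ p a, p ++ [a] ∈ T → V (p ++ [a]) ≤ V p) (hV_bot : ∀ p, V p ≠ ⊥)
    (hW_even : ∀ p a, Even p.length → W p ≤ W (p ++ [a]))
    (hW_odd : ∀ p ∈ T, Odd p.length → ∃ s : Finset A, (∀ a ∈ s, p ++ [a] ∈ T) ∧
      (s : Set A).PairwiseDisjoint (fun a => V (p ++ [a])) ∧ W p ≤ ∑ a ∈ s, W (p ++ [a]))
    {p : List A} (h : PlayerIForces T G p) (hp : p ∈ T) :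
    ∃ F : Finset (List A), (∀ q ∈ F, q ∈ G ∧ V q ≤ V p) ∧ (F : Set (List A)).PairwiseDisjoint V ∧
      W p ≤ ∑ q ∈ F, W q := by
  classical
  induction h with
  | @goal p hG => exact ⟨{p}, by simpa using hG, by simp, by simp⟩
  | @moveI p a heven ha _ ih =>
    obtain ⟨F, hF, hdisj, hsum⟩ := ih ha
    exact ⟨F, fun q hq => ⟨(hF q hq).1, (hF q hq).2.trans (hV p a ha)⟩, hdisj,
      (hW_even p a heven).trans hsum⟩
  | @moveII p hodd _ ih =>
    obtain ⟨s, hsT, hs, hWs⟩ := hW_odd p hp hodd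
    choose! F hF hdisj hsum using fun a ha => ih a (hsT a ha) (hsT a ha)
    have hcross : ∀ a ∈ s, ∀ b ∈ s, a ≠ b → ∀ q ∈ F a, ∀ q' ∈ F b, Disjoint (V q) (V q') :=
      fun a ha b hb hab q hq q' hq' =>
        (hs ha hb hab).mono (hF a ha q hq).2 (hF b hb q' hq').2
    have hF_disj : (s : Set A).PairwiseDisjoint F := fun a ha b hb hab =>
      Finset.disjoint_left.2 fun q hq hq' =>
        hV_bot q (disjoint_self.1 (hcross a ha b hb hab q hq q hq'))
    refine ⟨s.biUnion F, fun q hq => ?_, fun q hq q' hq' hne => ?_, ?_⟩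
    · obtain ⟨a, ha, hqa⟩ := Finset.mem_biUnion.1 hq
      exact ⟨(hF a ha q hqa).1, (hF a ha q hqa).2.trans (hV p a (hsT a ha))⟩
    · obtain ⟨a, ha, hqa⟩ := Finset.mem_biUnion.1 hq
      obtain ⟨b, hb, hqb⟩ := Finset.mem_biUnion.1 hq'
      rcases eq_or_ne a b with rfl | hab
      · exact hdisj a ha hqa hqb hne
      · exact hcross a ha b hb hab q hqa q' hqb
    · rw [Finset.sum_biUnion hF_disj]
      exact hWs.trans (Finset.sum_le_sum hsum)

end OpenGame

/-! ### Doubling spaces -/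

section Doubling

/-- `Y` is doubling with constant `D`: every closed ball is covered by at most `D` closed balls of
half its radius, with arbitrary centers. -/
def IsDoubling (Y : Type*) [PseudoMetricSpace Y] (D : ℕ) : Prop :=
  ∀ (x : Y) (r : ℝ), 0 < r → ∃ t : Finset Y, t.card ≤ D ∧
    closedBall x r ⊆ ⋃ y ∈ t, closedBall y (r / 2)

variable {Y ι : Type*} [PseudoMetricSpace Y] {D : ℕ}

theorem IsDoubling.exists_cover_closedBall (hD : IsDoubling Y D) (k : ℕ) (x : Y) {r : ℝ}
    (hr : 0 < r) :
    ∃ t : Finset Y, t.card ≤ D ^ k ∧ closedBall x r ⊆ ⋃ y ∈ t, closedBall y (r / 2 ^ k) := by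
  classical
  induction k with
  | zero => exact ⟨{x}, by simp, by simp⟩
  | succ k ih =>
    obtain ⟨t, ht, hcover⟩ := ih
    choose u hu hu_cover using fun y => hD y (r / 2 ^ k) (by positivity)
    refine ⟨t.biUnion u, ?_, fun z hz => ?_⟩
    · calc (t.biUnion u).card ≤ t.card * D := Finset.card_biUnion_le_card_mul _ _ _ fun y _ => hu y
        _ ≤ D ^ (k + 1) := by rw [pow_succ]; gcongr
    · obtain ⟨y, hy, hzy⟩ := mem_iUnion₂.1 (hcover hz)
      obtain ⟨w, hw, hzw⟩ := mem_iUnion₂.1 (hu_cover y hzy)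
      rw [div_div, ← pow_succ] at hzw
      exact mem_iUnion₂.2 ⟨w, Finset.mem_biUnion.2 ⟨y, hy, hw⟩, hzw⟩

theorem IsDoubling.card_le_of_pairwise_lt_dist (hD : IsDoubling Y D) (k : ℕ) {x : Y} {r : ℝ}
    (hr : 0 < r) {F : Finset ι} {z : ι → Y} (hz : ∀ i ∈ F, z i ∈ closedBall x r)
    (hsep : (F : Set ι).Pairwise fun i j => 2 * (r / 2 ^ k) < dist (z i) (z j)) :
    F.card ≤ D ^ k := by
  obtain ⟨t, ht, hcover⟩ := hD.exists_cover_closedBall k x hr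
  have hnear : ∀ i ∈ F, ∃ y ∈ t, dist (z i) y ≤ r / 2 ^ k := fun i hi => by
    simpa using hcover (hz i hi)
  have : Nonempty Y := ⟨x⟩
  choose! f hft hf using hnear
  refine (Finset.card_le_card_of_injOn f hft fun i hi j hj hij => ?_).trans ht
  by_contra hne
  have hj_near := hf j hj
  rw [← hij] at hj_near
  linarith [hsep hi hj hne, hf i hi, dist_triangle_right (z i) (z j) (f i)]

theorem le_dist_of_disjoint_interior_closedBall {x y : Y} {R : ℝ} (hR : 0 < R)
    (h : Disjoint (interior (closedBall x R)) (interior (closedBall y R))) : R ≤ dist x y := by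
  by_contra! hlt
  exact Set.disjoint_left.1 h (ball_subset_interior_closedBall (mem_ball_self hR))
    (ball_subset_interior_closedBall hlt)

theorem IsDoubling.card_le_of_disjoint_interior_closedBall (hD : IsDoubling Y D) {R : ℝ}
    (hR : 0 < R) {U : Set Y} (hU : ediam U ≤ ENNReal.ofReal R) {F : Finset ι} {z : ι → Y}
    (hmeet : ∀ i ∈ F, (closedBall (z i) R ∩ U).Nonempty)
    (hdisj : (F : Set ι).PairwiseDisjoint fun i => interior (closedBall (z i) R)) :
    F.card ≤ D ^ 3 := by
  rcases F.eq_empty_or_nonempty with rfl | ⟨i₀, hi₀⟩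
  · simp
  obtain ⟨u, -, hu⟩ := hmeet i₀ hi₀
  -- The centers lie within `2 * R` of `u` and are `R`-separated, and `2 * (2 * R / 2 ^ 3) < R`.
  refine hD.card_le_of_pairwise_lt_dist 3 (x := u) (r := 2 * R) (z := z) (by positivity)
    (fun i hi => ?_) fun i hi j hj hij => ?_
  · obtain ⟨v, hv, hvU⟩ := hmeet i hi
    have huv : dist v u ≤ R :=
      (ENNReal.ofReal_le_ofReal_iff hR.le).1
        (edist_dist v u ▸ (edist_le_ediam_of_mem hvU hu).trans hU)
    rw [mem_closedBall'] at hv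
    rw [mem_closedBall]
    linarith [dist_triangle (z i) v u, dist_comm v (z i)]
  · linarith [le_dist_of_disjoint_interior_closedBall hR (hdisj hi hj hij)]

end Doubling

/-! ### Covers of sets of small Hausdorff dimension -/

section Cover

theorem sum_comp_le_mul_tsum_of_card_fiber_le {ι κ : Type*} [DecidableEq κ] {F : Finset ι}
    {k : ι → κ} {C : ℕ} (hC : ∀ j, (F.filter fun i => k i = j).card ≤ C) (g : κ → ℝ≥0∞) :
    ∑ i ∈ F, g (k i) ≤ C * ∑' j, g j :=
  calc ∑ i ∈ F, g (k i) = ∑ j ∈ F.image k, (F.filter fun i => k i = j).card • g j :=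
        Finset.sum_comp g k
    _ ≤ ∑ j ∈ F.image k, C * g j := Finset.sum_le_sum fun j _ => by
        rw [nsmul_eq_mul]
        gcongr
        exact hC j
    _ ≤ ∑' j, C * g j := ENNReal.sum_le_tsum _
    _ = C * ∑' j, g j := ENNReal.tsum_mul_left

theorem exists_pos_ge_tsum_rpow_lt {κ : Type*} [Countable κ] {x : κ → ℝ≥0∞} {δ : ℝ} (hδ : 0 < δ)
    {ε : ℝ≥0∞} (hx : ∑' k, x k ^ δ < ε) :
    ∃ d : κ → ℝ, (∀ k, 0 < d k) ∧ (∀ k, x k ≤ ENNReal.ofReal (d k)) ∧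
      ∑' k, ENNReal.ofReal (d k) ^ δ < ε := by
  obtain ⟨η, hη, hη_sum⟩ := ENNReal.exists_pos_sum_of_countable' (tsub_pos_of_lt hx).ne' κ
  have hsum : ∑' k, (x k ^ δ + η k) < ε := by
    rw [ENNReal.tsum_add, add_comm]
    exact lt_tsub_iff_right.1 hη_sum
  have hpos : ∀ k, 0 < x k ^ δ + η k := fun k => (hη k).trans_le le_add_self
  have htop : ∀ k, x k ^ δ + η k ≠ ∞ := fun k =>
    (((ENNReal.le_tsum k).trans_lt hsum).trans_le le_top).ne
  have hroot_top : ∀ k, (x k ^ δ + η k) ^ δ⁻¹ ≠ ∞ := fun k =>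
    ENNReal.rpow_ne_top_of_nonneg (inv_nonneg.2 hδ.le) (htop k)
  refine ⟨fun k => ((x k ^ δ + η k) ^ δ⁻¹).toReal, fun k => ?_, fun k => ?_, ?_⟩
  · exact ENNReal.toReal_pos (ENNReal.rpow_pos (hpos k) (htop k)).ne' (hroot_top k)
  · rw [ENNReal.ofReal_toReal (hroot_top k), ENNReal.le_rpow_inv_iff hδ]
    exact le_self_add
  · simpa only [ENNReal.ofReal_toReal (hroot_top _), ENNReal.rpow_inv_rpow hδ.ne'] using hsum

theorem exists_cover_tsum_ediam_rpow_lt {Y : Type*} [EMetricSpace Y] {S : Set Y} {δ : ℝ}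
    (hS : dimH S < ENNReal.ofReal δ) {ε : ℝ≥0∞} (hε : 0 < ε) :
    ∃ t : ℕ → Set Y, S ⊆ ⋃ k, t k ∧ ∑' k, ediam (t k) ^ δ < ε := by
  borelize Y
  have hδ : 0 < δ := ENNReal.ofReal_pos.1 (bot_le.trans_lt hS)
  have hμ := hausdorffMeasure_of_dimH_lt (d := δ.toNNReal) hS
  rw [Real.coe_toNNReal _ hδ.le, MeasureTheory.Measure.hausdorffMeasure_apply] at hμ
  simp only [ENNReal.iSup_eq_zero] at hμ
  have hinf := (hμ 1 one_pos).trans_lt hε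
  simp only [iInf_lt_iff] at hinf
  obtain ⟨t, hSt, -, hsum⟩ := hinf
  refine ⟨t, hSt, hsum.trans_eq' (tsum_congr fun k => ?_)⟩
  rcases (t k).eq_empty_or_nonempty with hempty | hne
  · simp [hempty, hδ]
  · simp [hne]

theorem exists_pow_mul_lt_le {l d R : ℝ} (hl : l ∈ Ioo (0 : ℝ) 1) (hd : 0 < d) (hdR : d ≤ R) :
    ∃ N : ℕ, l ^ (N + 1) * R < d ∧ d ≤ l ^ N * R := by
  have hR := hd.trans_le hdR
  obtain ⟨N, hlt, hle⟩ :=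
    exists_nat_pow_near_of_lt_one (div_pos hd hR) ((div_le_one hR).2 hdR) hl.1 hl.2
  exact ⟨N, (lt_div_iff₀ hR).1 hlt, (div_le_iff₀ hR).1 hle⟩

theorem ofReal_rpow_pow_mul_ofReal_rpow {l R δ : ℝ} (hl : 0 ≤ l) (hδ : 0 ≤ δ) (N : ℕ) :
    (ENNReal.ofReal l ^ δ) ^ N * ENNReal.ofReal (l * R) ^ δ =
      ENNReal.ofReal (l ^ (N + 1) * R) ^ δ := by
  rw [pow_succ, mul_assoc, ENNReal.ofReal_mul (pow_nonneg hl N), ENNReal.mul_rpow_of_nonneg _ _ hδ,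
    ENNReal.ofReal_pow hl, ← ENNReal.rpow_natCast, ← ENNReal.rpow_natCast, ← ENNReal.rpow_mul,
    ← ENNReal.rpow_mul, mul_comm δ]

theorem lt_of_tsum_pow_lt {κ : Type*} {w : ℝ≥0∞} (hw : w ≤ 1) {N : κ → ℕ} {n : ℕ}
    (h : ∑' k, w ^ N k < w ^ n) (k : κ) : n < N k := by
  by_contra! hle
  exact h.not_ge ((pow_le_pow_right_of_le_one' hw hle).trans (ENNReal.le_tsum k))

theorem exists_cover_ediam_le_pow_mul {Y : Type*} [EMetricSpace Y] {S : Set Y} {δ l R : ℝ}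
    (hS : dimH S < ENNReal.ofReal δ) (hl : l ∈ Ioo (0 : ℝ) 1) (hR : 0 < R) (n₀ : ℕ) {ε : ℝ≥0∞}
    (hε : 0 < ε) :
    ∃ (t : ℕ → Set Y) (N : ℕ → ℕ), S ⊆ ⋃ k, t k ∧ (∀ k, n₀ < N k) ∧
      (∀ k, ediam (t k) ≤ ENNReal.ofReal (l ^ N k * R)) ∧
      ∑' k, (ENNReal.ofReal l ^ δ) ^ N k < ε := by
  have hδ : 0 < δ := ENNReal.ofReal_pos.1 (bot_le.trans_lt hS)
  have hrpow_pos : ∀ {a : ℝ}, 0 < a → 0 < ENNReal.ofReal a ^ δ := fun ha =>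
    ENNReal.rpow_pos (ENNReal.ofReal_pos.2 ha) ENNReal.ofReal_ne_top
  set w := ENNReal.ofReal l ^ δ with hw
  set K := ENNReal.ofReal (l * R) ^ δ with hK
  have hK_pos : 0 < K := hrpow_pos (mul_pos hl.1 hR)
  have hw_le : w ≤ 1 := ENNReal.rpow_le_one (ENNReal.ofReal_le_one.2 hl.2.le) hδ.le
  have hε' : 0 < min ε (w ^ n₀) := lt_min hε (ENNReal.pow_pos (hrpow_pos hl.1) n₀)
  obtain ⟨t, hSt, ht⟩ := exists_cover_tsum_ediam_rpow_lt hS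
    (lt_min (ENNReal.mul_pos hε'.ne' hK_pos.ne') (hrpow_pos hR))
  -- A set `t k` of diameter zero has no scale of its own, so work with positive bounds `d k`.
  obtain ⟨d, hd, htd, hd_sum⟩ := exists_pos_ge_tsum_rpow_lt hδ ht
  obtain ⟨hd_sum, hd_sum_R⟩ := lt_min_iff.1 hd_sum
  have hdR : ∀ k, d k ≤ R := fun k => by
    have hterm := (ENNReal.le_tsum k).trans_lt hd_sum_R
    rw [ENNReal.rpow_lt_rpow_iff hδ, ENNReal.ofReal_lt_ofReal_iff hR] at hterm
    exact hterm.le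
  choose N hN_lt hN_le using fun k => exists_pow_mul_lt_le hl (hd k) (hdR k)
  have hsum : ∑' k, w ^ N k < min ε (w ^ n₀) := by
    refine lt_of_mul_lt_mul_right' (a := K) ?_
    calc (∑' k, w ^ N k) * K = ∑' k, ENNReal.ofReal (l ^ (N k + 1) * R) ^ δ := by
          simp only [← ENNReal.tsum_mul_right, hw, hK,
            ofReal_rpow_pow_mul_ofReal_rpow hl.1.le hδ.le]
      _ ≤ ∑' k, ENNReal.ofReal (d k) ^ δ := ENNReal.tsum_le_tsum fun k => by
          gcongr
          exact (hN_lt k).le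
      _ < min ε (w ^ n₀) * K := hd_sum
  exact ⟨t, N, hSt, lt_of_tsum_pow_lt hw_le (hsum.trans_le (min_le_right _ _)),
    fun k => (htd k).trans (ENNReal.ofReal_le_ofReal (hN_le k)), hsum.trans_le (min_le_left _ _)⟩

theorem natCast_mul_ofReal_rpow_log_div_log_one_div {l : ℝ} (hl : l ∈ Ioo (0 : ℝ) 1) {m : ℕ}
    (hm : 1 ≤ m) : (m : ℝ≥0∞) * ENNReal.ofReal l ^ (Real.log m / Real.log (1 / l)) = 1 := by
  have hm_pos : (0 : ℝ) < m := by exact_mod_cast hm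
  have hrpow : l ^ (Real.log m / Real.log (1 / l)) = (m : ℝ)⁻¹ := by
    rw [Real.log_div_log, one_div, Real.logb_inv_base, Real.rpow_neg hl.1.le,
      Real.rpow_logb hl.1 hl.2.ne hm_pos]
  rw [ENNReal.ofReal_rpow_of_pos hl.1, hrpow, ← ENNReal.ofReal_natCast,
    ← ENNReal.ofReal_mul hm_pos.le, mul_inv_cancel₀ hm_pos.ne', ENNReal.ofReal_one]

end Cover

/-! ### Trees of the Schmidt game -/

section SchmidtTree

variable {α β ρ : ℝ} {c : X} {T : Set (List X)}

/-- The ball played last in the position `p` of the `(α,β)`-Schmidt game, or the initial ball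
`B̄(c,ρ)` at the empty position. The radius is `rho α β ρ (p.length - 1)` when `p` is nonempty. -/
def positionBall (α β : ℝ) (c : X) (ρ : ℝ) (p : List X) : Set X :=
  closedBall (p.getLastD c) (α ^ ((p.length + 1) / 2) * β ^ (p.length / 2) * ρ)

theorem positionBall_append (α β : ℝ) (c : X) (ρ : ℝ) (p : List X) (a : X) :
    positionBall α β c ρ (p ++ [a]) = closedBall a (rho α β ρ p.length) := by
  have h : (p.length + 1 + 1) / 2 = p.length / 2 + 1 := by omega
  simp [positionBall, rho, h]

theorem positionBall_of_length_eq_two_mul {p : List X} {n : ℕ} (hp : p.length = 2 * n) :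
    positionBall α β c ρ p = closedBall (p.getLastD c) ((α * β) ^ n * ρ) := by
  have h : (2 * n + 1) / 2 = n := by omega
  simp [positionBall, hp, h, mul_pow]

theorem positionBall_ofFn_succ (y : ℕ → X) (n : ℕ) :
    positionBall α β c ρ (List.ofFn fun j : Fin (n + 1) => y j) =
      closedBall (y n) (rho α β ρ n) := by
  rw [← ofFn_append_singleton, positionBall_append, List.length_ofFn]

theorem interior_positionBall_nonempty (hα : 0 < α) (hβ : 0 < β) (hρ : 0 < ρ) (p : List X) :
    (interior (positionBall α β c ρ p)).Nonempty :=
  ⟨_, ball_subset_interior_closedBall (mem_ball_self (by positivity))⟩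

theorem IsSchmidtTree.positionBall_append_subset (hT : IsSchmidtTree α β c ρ T) {p : List X}
    {a : X} (h : p ++ [a] ∈ T) : positionBall α β c ρ (p ++ [a]) ⊆ positionBall α β c ρ p := by
  have hnested := hT.2 _ h p.length (by simp)
  rw [positionBall_append]
  rcases p.eq_nil_or_concat' with rfl | ⟨q, b, rfl⟩
  · simpa [positionBall] using hnested
  · rw [positionBall_append]
    simpa using hnested

theorem IsSchmidtTree.antitone_closedBall (hT : IsSchmidtTree α β c ρ T) {y : ℕ → X}
    (hy : ∀ n : ℕ, (List.ofFn fun j : Fin n => y j) ∈ T) :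
    Antitone fun n => closedBall (y n) (rho α β ρ n) := by
  refine antitone_nat_of_succ_le fun n => ?_
  have hmem := hy (n + 1 + 1)
  rw [← ofFn_append_singleton] at hmem
  simpa only [ofFn_append_singleton, positionBall_ofFn_succ] using
    hT.positionBall_append_subset hmem

theorem rho_nonneg (hα : 0 ≤ α) (hβ : 0 ≤ β) (hρ : 0 ≤ ρ) (k : ℕ) : 0 ≤ rho α β ρ k := by
  unfold rho; positivity

theorem tendsto_rho (hα : α ∈ Ico (0 : ℝ) 1) (hβ : β ∈ Icc (0 : ℝ) 1) (hρ : 0 ≤ ρ) :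
    Filter.Tendsto (rho α β ρ) Filter.atTop (nhds 0) := by
  have hpow : Filter.Tendsto (fun k : ℕ => α ^ (k / 2 + 1) * ρ) Filter.atTop (nhds 0) := by
    have h := (tendsto_pow_atTop_nhds_zero_of_lt_one hα.1 hα.2).comp
      ((Filter.tendsto_add_atTop_nat 1).comp (Nat.tendsto_div_const_atTop two_ne_zero))
    simpa using h.mul_const ρ
  refine squeeze_zero (rho_nonneg hα.1 hβ.1 hρ) (fun k => ?_) hpow
  exact mul_le_mul_of_nonneg_right
    (mul_le_of_le_one_right (pow_nonneg hα.1 _) (pow_le_one₀ hβ.1 hβ.2)) hρ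

theorem IsSchmidtTree.nonempty_iInter_closedBall [CompleteSpace X] (hα : α ∈ Ico (0 : ℝ) 1)
    (hβ : β ∈ Icc (0 : ℝ) 1) (hρ : 0 ≤ ρ) (hT : IsSchmidtTree α β c ρ T) {y : ℕ → X}
    (hy : ∀ n : ℕ, (List.ofFn fun j : Fin n => y j) ∈ T) :
    (⋂ n : ℕ, closedBall (y n) (rho α β ρ n)).Nonempty := by
  have hnonneg := rho_nonneg hα.1 hβ.1 hρ
  refine nonempty_iInter_of_nonempty_biInter (fun _ => isClosed_closedBall)
    (fun _ => isBounded_closedBall) (fun n => ⟨y n, mem_iInter₂.2 fun k hk =>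
      hT.antitone_closedBall hy hk (mem_closedBall_self (hnonneg n))⟩) ?_
  refine squeeze_zero (fun _ => diam_nonneg) (fun n => diam_closedBall (hnonneg n)) ?_
  simpa using (tendsto_rho hα hβ hρ).const_mul 2

/-- The positions, of length `2 * N k` for some `k`, at which the current ball has reached the
scale `(α * β) ^ N k * ρ` of the set `t k` and still meets it. With `t` a cover of the target set,
Player II wins by avoiding these positions. -/
def hittingPositions (α β : ℝ) (c : X) (ρ : ℝ) (t : ℕ → Set X) (N : ℕ → ℕ) : Set (List X) :=
  {p | ∃ k, p.length = 2 * N k ∧ (positionBall α β c ρ p ∩ t k).Nonempty}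

theorem ofFn_mem_hittingPositions {t : ℕ → Set X} {N : ℕ → ℕ} {y : ℕ → X} {x : X}
    (hx : x ∈ ⋂ n : ℕ, closedBall (y n) (rho α β ρ n)) {k : ℕ} (hk : x ∈ t k) (hN : 0 < N k) :
    (List.ofFn fun j : Fin (2 * N k) => y j) ∈ hittingPositions α β c ρ t N := by
  refine ⟨k, List.length_ofFn, x, ?_, hk⟩
  obtain ⟨n, hn⟩ := Nat.exists_eq_add_one.2 (Nat.mul_pos two_pos hN)
  rw [hn, positionBall_ofFn_succ]
  exact mem_iInter.1 hx n

theorem IsDoubling.sum_pow_length_half_le {D : ℕ} (hD : IsDoubling X D) (hα : 0 < α) (hβ : 0 < β)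
    (hρ : 0 < ρ) {t : ℕ → Set X} {N : ℕ → ℕ}
    (ht : ∀ k, ediam (t k) ≤ ENNReal.ofReal ((α * β) ^ N k * ρ)) (w : ℝ≥0∞)
    {F : Finset (List X)} (hF : ∀ p ∈ F, p ∈ hittingPositions α β c ρ t N)
    (hdisj : (F : Set (List X)).PairwiseDisjoint fun p => interior (positionBall α β c ρ p)) :
    ∑ p ∈ F, w ^ (p.length / 2) ≤ D ^ 3 * ∑' k, w ^ N k := by
  choose! k hlength hmeet using hF
  have hball : ∀ p ∈ F, positionBall α β c ρ p =
      closedBall (p.getLastD c) ((α * β) ^ N (k p) * ρ) := fun p hp =>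
    positionBall_of_length_eq_two_mul (hlength p hp)
  have hcard : ∀ j, (F.filter fun p => k p = j).card ≤ D ^ 3 := fun j => by
    refine hD.card_le_of_disjoint_interior_closedBall (R := (α * β) ^ N j * ρ)
      (z := fun p => p.getLastD c) (by positivity) (ht j) (fun p hp => ?_) fun p hp q hq hpq => ?_
    · obtain ⟨hpF, rfl⟩ := Finset.mem_filter.1 hp
      exact hball p hpF ▸ hmeet p hpF
    · obtain ⟨hpF, rfl⟩ := Finset.mem_filter.1 hp
      obtain ⟨hqF, hk⟩ := Finset.mem_filter.1 hq
      simpa only [Function.onFun, hball p hpF, hball q hqF, hk] using hdisj hpF hqF hpq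
  calc ∑ p ∈ F, w ^ (p.length / 2) = ∑ p ∈ F, w ^ N (k p) := Finset.sum_congr rfl fun p hp => by
        rw [hlength p hp, Nat.mul_div_cancel_left _ two_pos]
    _ ≤ (D ^ 3 : ℕ) * ∑' j, w ^ N j :=
        sum_comp_le_mul_tsum_of_card_fiber_le hcard fun j => w ^ N j
    _ = D ^ 3 * ∑' j, w ^ N j := by rw [Nat.cast_pow]

/-- From stage `n₀` on, Player II always has `m` moves in `T` whose balls have pairwise disjoint
interiors. -/
def HasDisjointMoves (α β ρ : ℝ) (T : Set (List X)) (m n₀ : ℕ) : Prop :=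
  ∀ n : ℕ, n₀ ≤ n → ∀ p ∈ T, p.length = 2 * n + 1 →
    ∃ a : Fin m → X, Function.Injective a ∧ (∀ j, p ++ [a j] ∈ T) ∧
      Pairwise fun j j' : Fin m =>
        Disjoint (interior (closedBall (a j) ((α * β) ^ (n + 1) * ρ)))
          (interior (closedBall (a j') ((α * β) ^ (n + 1) * ρ)))

/-- The mass passed on to the position `p` when every move of Player II from stage `n₀` on
multiplies the mass by `w`, normalized to be `w ^ n₀` until then. -/
noncomputable def stageWeight {A : Type*} (w : ℝ≥0∞) (n₀ : ℕ) (p : List A) : ℝ≥0∞ :=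
  w ^ max (p.length / 2) n₀

theorem stageWeight_append_of_even {A : Type*} (w : ℝ≥0∞) (n₀ : ℕ) {p : List A}
    (hp : Even p.length) (a : A) : stageWeight w n₀ (p ++ [a]) = stageWeight w n₀ p := by
  have h : (p.length + 1) / 2 = p.length / 2 := by grind
  simp [stageWeight, h]

theorem HasDisjointMoves.exists_stageWeight_le_sum {m n₀ : ℕ}
    (hmoves : HasDisjointMoves α β ρ T m n₀) (hT : IsTree T) {w : ℝ≥0∞} (hw : 1 ≤ m * w)
    {p : List X} (hp : p ∈ T) (hodd : Odd p.length) :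
    ∃ s : Finset X, (∀ a ∈ s, p ++ [a] ∈ T) ∧
      (s : Set X).PairwiseDisjoint (fun a => interior (positionBall α β c ρ (p ++ [a]))) ∧
      stageWeight w n₀ p ≤ ∑ a ∈ s, stageWeight w n₀ (p ++ [a]) := by
  classical
  obtain ⟨n, hn⟩ := hodd
  have hlength : p.length / 2 = n := by omega
  have hlength' : (p.length + 1) / 2 = n + 1 := by omega
  rcases lt_or_ge n n₀ with hlt | hge
  · obtain ⟨a, ha⟩ := hT.2.2 p hp
    refine ⟨{a}, by simpa using ha, by simp, ?_⟩
    simp [stageWeight, hlength, hlength', max_eq_right (Nat.succ_le_of_lt hlt), max_eq_right hlt.le]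
  · obtain ⟨a, ha_inj, haT, hdisj⟩ := hmoves n hge p hp hn
    have hball : ∀ b, positionBall α β c ρ (p ++ [b]) = closedBall b ((α * β) ^ (n + 1) * ρ) :=
      fun b => by
        rw [positionBall_of_length_eq_two_mul (n := n + 1) (by simp [hn]; ring)]
        simp
    refine ⟨Finset.univ.image a, by simpa using haT, ?_, ?_⟩
    · rintro b hb b' hb' hne
      obtain ⟨j, -, rfl⟩ := Finset.mem_image.1 hb
      obtain ⟨j', -, rfl⟩ := Finset.mem_image.1 hb'
      simpa only [Function.onFun, hball] using hdisj fun h => hne (congrArg a h)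
    · rw [Finset.sum_image ha_inj.injOn]
      calc stageWeight w n₀ p = 1 * w ^ n := by simp [stageWeight, hlength, hge]
        _ ≤ m * w * w ^ n := by gcongr
        _ = ∑ j, stageWeight w n₀ (p ++ [a j]) := by
          simp [stageWeight, hlength', hge.trans n.le_succ, pow_succ', mul_assoc]

theorem IsSchmidtTree.not_playerIForces_hittingPositions {D : ℕ} (hD : IsDoubling X D)
    (hα : 0 < α) (hβ : 0 < β) (hρ : 0 < ρ) (hT : IsSchmidtTree α β c ρ T) {m n₀ : ℕ}
    (hmoves : HasDisjointMoves α β ρ T m n₀) {w : ℝ≥0∞} (hw : 1 ≤ m * w) {t : ℕ → Set X}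
    {N : ℕ → ℕ} (hN : ∀ k, n₀ ≤ N k) (ht : ∀ k, ediam (t k) ≤ ENNReal.ofReal ((α * β) ^ N k * ρ))
    (hsum : D ^ 3 * ∑' k, w ^ N k < w ^ n₀) :
    ¬ PlayerIForces T (hittingPositions α β c ρ t N) [] := by
  intro hforce
  obtain ⟨F, hF, hdisj, hle⟩ := hforce.exists_pairwiseDisjoint_le_sum
    (V := fun p => interior (positionBall α β c ρ p)) (W := stageWeight w n₀)
    (fun p a ha => interior_mono (hT.positionBall_append_subset ha))
    (fun p => (interior_positionBall_nonempty hα hβ hρ p).ne_empty)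
    (fun p a hp => (stageWeight_append_of_even w n₀ hp a).ge)
    (fun p hp hodd => hmoves.exists_stageWeight_le_sum hT.1 hw hp hodd) hT.1.nil_mem
  refine hsum.not_ge ?_
  calc w ^ n₀ = stageWeight w n₀ ([] : List X) := by simp [stageWeight]
    _ ≤ ∑ p ∈ F, stageWeight w n₀ p := hle
    _ = ∑ p ∈ F, w ^ (p.length / 2) := Finset.sum_congr rfl fun p hp => by
        obtain ⟨k, hk, -⟩ := (hF p hp).1
        have hlevel : n₀ ≤ p.length / 2 := by have hNk := hN k; omega
        rw [stageWeight, max_eq_left hlevel]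
    _ ≤ D ^ 3 * ∑' k, w ^ N k :=
        hD.sum_pow_length_half_le hα hβ hρ ht w (fun p hp => (hF p hp).1) hdisj

end SchmidtTree

/-- If in some tree of the subgame, from some stage on, every position of odd length `2n+1`
has `m` one-step extensions whose balls have pairwise disjoint interiors, and
`dim_H S < log m / log (1/(αβ))`, then Player II has a winning strategy in the
`(α,β)`-Schmidt subgame with target set `S`. -/
theorem playerII_wins_schmidt_subgame [CompleteSpace X] (D : ℕ)
    (hD : ∀ (x : X) (r : ℝ), 0 < r → ∃ t : Finset X, t.card ≤ D ∧
      closedBall x r ⊆ ⋃ y ∈ t, closedBall y (r / 2))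
    (α β : ℝ) (hα : α ∈ Set.Ioo (0 : ℝ) 1) (hβ : β ∈ Set.Ioo (0 : ℝ) 1) (S : Set X)
    (ι : Type*) [Nonempty ι] (c : ι → X) (r : ι → ℝ) (hr : ∀ i, 0 < r i)
    (T : ι → Set (List X)) (hT : ∀ i, IsSchmidtTree α β (c i) (r i) (T i))
    (m : ℕ) (hm : 1 ≤ m)
    (hyp : ∃ (i₀ : ι) (n₀ : ℕ), ∀ n : ℕ, n₀ ≤ n → ∀ p ∈ T i₀, p.length = 2 * n + 1 →
      ∃ a : Fin m → X, Function.Injective a ∧ (∀ j, p ++ [a j] ∈ T i₀) ∧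
        Pairwise fun j j' : Fin m =>
          Disjoint (interior (closedBall (a j) ((α * β) ^ (n + 1) * r i₀)))
            (interior (closedBall (a j') ((α * β) ^ (n + 1) * r i₀))))
    (hS : dimH S < ENNReal.ofReal (Real.log m / Real.log (1 / (α * β)))) :
    ∃ (i : ι) (σ : List X → X),
      (∀ p ∈ T i, Odd p.length → p ++ [σ p] ∈ T i) ∧
      ∀ y : ℕ → X, (∀ n : ℕ, (List.ofFn fun j : Fin n => y j) ∈ T i) →
        (∀ n : ℕ, Odd n → y n = σ (List.ofFn fun j : Fin n => y j)) →
        ¬ (⋂ n : ℕ, closedBall (y n) (rho α β (r i) n)) ⊆ S := by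
  obtain ⟨i, n₀, hmoves⟩ := hyp
  have hαβ : α * β ∈ Ioo (0 : ℝ) 1 :=
    ⟨mul_pos hα.1 hβ.1, mul_lt_one_of_nonneg_of_lt_one_left hα.1.le hα.2 hβ.2.le⟩
  have hmw := natCast_mul_ofReal_rpow_log_div_log_one_div hαβ hm
  have hw_pos : 0 < (ENNReal.ofReal (α * β) ^ (Real.log m / Real.log (1 / (α * β)))) ^ n₀ :=
    ENNReal.pow_pos (pos_iff_ne_zero.2 (right_ne_zero_of_mul_eq_one hmw)) n₀
  obtain ⟨t, N, hSt, hN, ht, hsum⟩ := exists_cover_ediam_le_pow_mul hS hαβ (hr i) n₀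
    (ENNReal.div_pos hw_pos.ne' (ENNReal.pow_ne_top (ENNReal.natCast_ne_top D) (n := 3)))
  have hsafe := (hT i).not_playerIForces_hittingPositions hD hα.1 hβ.1 (hr i) hmoves hmw.ge
    (fun k => (hN k).le) ht (ENNReal.mul_lt_of_lt_div' hsum)
  have : Nonempty X := ⟨c i⟩
  obtain ⟨σ, hσT, hσ⟩ := (hT i).1.exists_strategy_avoiding hsafe
  refine ⟨i, σ, hσT, fun y hy hyσ hsub => ?_⟩
  obtain ⟨x, hx⟩ := (hT i).nonempty_iInter_closedBall (Ioo_subset_Ico_self hα)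
    (Ioo_subset_Icc_self hβ) (hr i).le hy
  obtain ⟨k, hk⟩ := mem_iUnion.1 (hSt (hsub hx))
  exact hσ y hy hyσ _ (ofFn_mem_hittingPositions hx hk (Nat.zero_lt_of_lt (hN k)))
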